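/- The credit-inheritance cost model (⇓ᶜᴵ, Φᶜᴵ, ⌊·⌋ᶜᴵ) is sound: whenever Γ : e ⇓ᶜᴵ_n Δ : v, there exists k with ⌊Γ⌋ᶜᴵ : e ⇓ᴿ_k ⌊Δ⌋ᶜᴵ : v and k + Φᶜᴵ(Δ) − Φᶜᴵ(Γ) ≤ n. -/

import Mathlib

/-! ## Syntax of the fine-grain call-by-value lambda calculus with thunks -/

mutual
inductive Val : Type where
  | var : String → Val
  | ptr : Nat → Val
  | unit : Val
  | inl : Val → Val
  | inr : Val → Val
  | pair : Val → Val → Val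
  | lam : String → Expr → Val

inductive HeapVal : Type where
  | fold : Val → HeapVal
  | memo : Val → HeapVal
  | lazy : String → Val → HeapVal

inductive Expr : Type where
  | ret : Val → Expr
  | alloc : HeapVal → Expr
  | letE : String → Expr → Expr → Expr
  | caseE : Val → String → Expr → String → Expr → Expr
  | splitE : Val → String → String → Expr → Expr
  | app : Val → Val → Expr
  | unfoldE : Val → Expr
  | call : String → Val → Expr
  | force : Val → Expr
  | save : Nat → Val → Expr
  | spend : Nat → Val → Expr → Expr
  | pass : Val → Expr
end

/-! ## Capture-avoiding substitution (values substituted are closed) -/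

mutual
def substV (v : Val) (x : String) : Val → Val
  | .var y => if y = x then v else .var y
  | .ptr a => .ptr a
  | .unit => .unit
  | .inl w => .inl (substV v x w)
  | .inr w => .inr (substV v x w)
  | .pair w₁ w₂ => .pair (substV v x w₁) (substV v x w₂)
  | .lam y e => if y = x then .lam y e else .lam y (substE v x e)

def substH (v : Val) (x : String) : HeapVal → HeapVal
  | .fold w => .fold (substV v x w)
  | .memo w => .memo (substV v x w)
  | .lazy F w => .lazy F (substV v x w)

def substE (v : Val) (x : String) : Expr → Expr
  | .ret w => .ret (substV v x w)
  | .alloc hv => .alloc (substH v x hv)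
  | .letE y e₁ e₂ => .letE y (substE v x e₁) (if y = x then e₂ else substE v x e₂)
  | .caseE w y₁ e₁ y₂ e₂ =>
      .caseE (substV v x w) y₁ (if y₁ = x then e₁ else substE v x e₁)
        y₂ (if y₂ = x then e₂ else substE v x e₂)
  | .splitE w y₁ y₂ e =>
      .splitE (substV v x w) y₁ y₂ (if y₁ = x ∨ y₂ = x then e else substE v x e)
  | .app w₁ w₂ => .app (substV v x w₁) (substV v x w₂)
  | .unfoldE w => .unfoldE (substV v x w)
  | .call F w => .call F (substV v x w)
  | .force w => .force (substV v x w)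
  | .save n w => .save n (substV v x w)
  | .spend n w e => .spend n (substV v x w) (substE v x e)
  | .pass w => .pass (substV v x w)
end

/-! ## Heaps: finite partial maps from pointers to (annotated) heap values -/

structure Heap (A : Type) : Type where
  look : Nat → Option A
  fin : {a : Nat | look a ≠ none}.Finite

namespace Heap

def empty {A : Type} : Heap A := ⟨fun _ => none, by simp⟩

def upd {A : Type} (Γ : Heap A) (a : Nat) (v : A) : Heap A :=
  ⟨fun b => if b = a then some v else Γ.look b, by
    apply Set.Finite.subset (Γ.fin.insert a)
    intro b hb
    simp only [Set.mem_setOf_eq] at hb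
    by_cases h : b = a
    · simp [h]
    · simp only [h, if_false] at hb
      exact Set.mem_insert_iff.mpr (Or.inr hb)⟩

def erase {A : Type} (Γ : Heap A) (a : Nat) : Heap A :=
  ⟨fun b => if b = a then none else Γ.look b, by
    apply Set.Finite.subset Γ.fin
    intro b hb
    simp only [Set.mem_setOf_eq] at hb ⊢
    by_cases h : b = a
    · simp [h] at hb
    · simpa [h] using hb⟩

def eraseSet {A : Type} (Γ : Heap A) (D : Finset Nat) : Heap A :=
  ⟨fun b => if b ∈ D then none else Γ.look b, by
    apply Set.Finite.subset Γ.fin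
    intro b hb
    simp only [Set.mem_setOf_eq] at hb ⊢
    by_cases h : b ∈ D
    · simp [h] at hb
    · simpa [h] using hb⟩

def map {A B : Type} (Γ : Heap A) (f : A → B) : Heap B :=
  ⟨fun b => (Γ.look b).map f, by
    apply Set.Finite.subset Γ.fin
    intro b hb
    simp only [Set.mem_setOf_eq] at hb ⊢
    intro h
    rw [h] at hb
    simp at hb⟩

noncomputable def dom {A : Type} (Γ : Heap A) : Finset Nat := Γ.fin.toFinset

/-- Sum a numeric annotation over all cells of the heap. -/
noncomputable def total {A : Type} (Γ : Heap A) (f : A → ℕ) : ℕ :=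
  ∑ a ∈ Γ.dom, (Γ.look a).elim 0 f

end Heap

/-! ## The real cost semantics ⇓ᴿ -/

/-- Environment of top-level (possibly recursive) function definitions. -/
abbrev FEnv := String → Option (String × Expr)

abbrev RHeap := Heap HeapVal

/-- Big-step real semantics `Γ : e ⇓ᴿ_k Δ : v`.  Lambda applications and
function calls cost one step; `save`, `spend` and `pass` are no-ops. -/
inductive RBig (𝓕 : FEnv) : RHeap → Expr → Nat → RHeap → Val → Prop where
  | ret : ∀ Γ v, RBig 𝓕 Γ (.ret v) 0 Γ v
  | alloc : ∀ Γ a hv, Γ.look a = none →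
      RBig 𝓕 Γ (.alloc hv) 0 (Γ.upd a hv) (.ptr a)
  | letE : ∀ Γ Δ Θ x e₁ e₂ k l v w,
      RBig 𝓕 Γ e₁ k Δ v → RBig 𝓕 Δ (substE v x e₂) l Θ w →
      RBig 𝓕 Γ (.letE x e₁ e₂) (k + l) Θ w
  | caseL : ∀ Γ Δ v x₁ e₁ x₂ e₂ k w,
      RBig 𝓕 Γ (substE v x₁ e₁) k Δ w →
      RBig 𝓕 Γ (.caseE (.inl v) x₁ e₁ x₂ e₂) k Δ w
  | caseR : ∀ Γ Δ v x₁ e₁ x₂ e₂ k w,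
      RBig 𝓕 Γ (substE v x₂ e₂) k Δ w →
      RBig 𝓕 Γ (.caseE (.inr v) x₁ e₁ x₂ e₂) k Δ w
  | splitE : ∀ Γ Δ v₁ v₂ x y e k w,
      RBig 𝓕 Γ (substE v₂ y (substE v₁ x e)) k Δ w →
      RBig 𝓕 Γ (.splitE (.pair v₁ v₂) x y e) k Δ w
  | app : ∀ Γ Δ x e v k w,
      RBig 𝓕 Γ (substE v x e) k Δ w →
      RBig 𝓕 Γ (.app (.lam x e) v) (k + 1) Δ w
  | unfoldE : ∀ Γ a v, Γ.look a = some (.fold v) →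
      RBig 𝓕 Γ (.unfoldE (.ptr a)) 0 Γ v
  | call : ∀ Γ Δ F x e v k w, 𝓕 F = some (x, e) →
      RBig 𝓕 Γ (substE v x e) k Δ w →
      RBig 𝓕 Γ (.call F v) (k + 1) Δ w
  | force : ∀ Γ Δ a F v k w, Γ.look a = some (.lazy F v) →
      RBig 𝓕 (Γ.erase a) (.call F v) k Δ w →
      RBig 𝓕 Γ (.force (.ptr a)) k (Δ.upd a (.memo w)) w
  | recall : ∀ Γ a v, Γ.look a = some (.memo v) →
      RBig 𝓕 Γ (.force (.ptr a)) 0 Γ v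
  | save : ∀ Γ m v, RBig 𝓕 Γ (.save m v) 0 Γ v
  | spend : ∀ Γ Δ m v e k w, RBig 𝓕 Γ e k Δ w →
      RBig 𝓕 Γ (.spend m v e) k Δ w
  | pass : ∀ Γ v, RBig 𝓕 Γ (.pass v) 0 Γ v

/-! ## Credit inheritance ⇓ᶜᴵ : memoised thunks carry an optional heir -/

/-- Heap values of the credit-inheritance model: credits on lazy thunks,
an (optional) heir pointer on memoised thunks. -/
inductive CIHV : Type where
  | fold : Val → CIHV
  | memo : Option ℕ → Val → CIHV
  | lazy : ℕ → String → Val → CIHV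

abbrev CIHeap := Heap CIHV

/-- Allocation in the credit-inheritance model. -/
def toCIHV : HeapVal → CIHV
  | .fold v => .fold v
  | .memo v => .memo none v
  | .lazy F v => .lazy 0 F v

/-- An heir set of at most one pointer, represented as an `Option`. -/
abbrev Heir := Option ℕ

/-- Union of two heir sets (used in the let rule). -/
def heirUnion (H₁ H₂ : Heir) : Heir := H₁.elim H₂ some

/-- The side condition `|h₁ ∪ h₂| ≤ 1` of the let rule. -/
def heirCompat (H₁ H₂ : Heir) : Prop := H₁ = none ∨ H₂ = none ∨ H₁ = H₂

/-- Big-step credit-inheritance semantics `Γ : e ⇓^H_k Δ : v`, where `H` is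
the heir set (of at most one pointer) chosen by the computation. -/
inductive CIBig (𝓕 : FEnv) : CIHeap → Expr → Heir → Nat → CIHeap → Val → Prop where
  | ret : ∀ Γ v, CIBig 𝓕 Γ (.ret v) none 0 Γ v
  | alloc : ∀ Γ a hv, Γ.look a = none →
      CIBig 𝓕 Γ (.alloc hv) none 0 (Γ.upd a (toCIHV hv)) (.ptr a)
  | letE : ∀ Γ Δ Θ x e₁ e₂ H₁ H₂ k l v w,
      CIBig 𝓕 Γ e₁ H₁ k Δ v → CIBig 𝓕 Δ (substE v x e₂) H₂ l Θ w →
      heirCompat H₁ H₂ →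
      CIBig 𝓕 Γ (.letE x e₁ e₂) (heirUnion H₁ H₂) (k + l) Θ w
  | caseL : ∀ Γ Δ v x₁ e₁ x₂ e₂ H k w,
      CIBig 𝓕 Γ (substE v x₁ e₁) H k Δ w →
      CIBig 𝓕 Γ (.caseE (.inl v) x₁ e₁ x₂ e₂) H k Δ w
  | caseR : ∀ Γ Δ v x₁ e₁ x₂ e₂ H k w,
      CIBig 𝓕 Γ (substE v x₂ e₂) H k Δ w →
      CIBig 𝓕 Γ (.caseE (.inr v) x₁ e₁ x₂ e₂) H k Δ w
  | splitE : ∀ Γ Δ v₁ v₂ x y e H k w,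
      CIBig 𝓕 Γ (substE v₂ y (substE v₁ x e)) H k Δ w →
      CIBig 𝓕 Γ (.splitE (.pair v₁ v₂) x y e) H k Δ w
  | app : ∀ Γ Δ x e v H k w,
      CIBig 𝓕 Γ (substE v x e) H k Δ w →
      CIBig 𝓕 Γ (.app (.lam x e) v) H (k + 1) Δ w
  | unfoldE : ∀ Γ a v, Γ.look a = some (.fold v) →
      CIBig 𝓕 Γ (.unfoldE (.ptr a)) none 0 Γ v
  | call : ∀ Γ Δ F x e v H k w, 𝓕 F = some (x, e) →
      CIBig 𝓕 Γ (substE v x e) H k Δ w →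
      CIBig 𝓕 Γ (.call F v) H (k + 1) Δ w
  | save : ∀ Γ a n F v m, Γ.look a = some (.lazy n F v) →
      CIBig 𝓕 Γ (.save m (.ptr a)) none m (Γ.upd a (.lazy (n + m) F v)) (.ptr a)
  | waste : ∀ Γ a v m, Γ.look a = some (.memo none v) →
      CIBig 𝓕 Γ (.save m (.ptr a)) none m Γ (.ptr a)
  | inherit : ∀ Γ Δ a h w m v, Γ.look a = some (.memo (some h) w) →
      CIBig 𝓕 Γ (.save m (.ptr h)) none m Δ v →
      CIBig 𝓕 Γ (.save m (.ptr a)) none m Δ (.ptr a)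
  | pass : ∀ Γ Δ h m v,
      CIBig 𝓕 Γ (.save m (.ptr h)) none m Δ v →
      CIBig 𝓕 Γ (.pass (.ptr h)) (some h) m Δ v
  | force : ∀ Γ Δ a n F v H k w, Γ.look a = some (.lazy n F v) →
      CIBig 𝓕 (Γ.erase a) (.call F v) H k Δ w → k = n →
      CIBig 𝓕 Γ (.force (.ptr a)) none 0 (Δ.upd a (.memo H w)) w
  | recall : ∀ Γ a H v, Γ.look a = some (.memo H v) →
      CIBig 𝓕 Γ (.force (.ptr a)) none 0 Γ v

/-- The potential Φᶜᴵ: the total number of credits on lazy thunks. -/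
noncomputable def ΦCI (Γ : CIHeap) : ℕ :=
  Γ.total (fun hv => match hv with | .lazy n _ _ => n | _ => 0)

/-- The erasure ⌊·⌋ᶜᴵ: drop credit and heir annotations. -/
def stripCI (Γ : CIHeap) : RHeap :=
  Γ.map (fun hv => match hv with
    | .fold v => .fold v
    | .memo _ v => .memo v
    | .lazy _ F v => .lazy F v)

/-!
Every rule of `⇓ᶜᴵ` is admissible for real evaluation with amortised cost measured by `ΦCI`.  Heirs
never enter the accounting: they only decide which lazy thunk a `save` credits, and paying into a
thunk that keeps no credits merely loses them.  In (force), the `n` credits removed from the heap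
together with the thunk are exactly the cost charged for its body.
-/

attribute [ext] Heap

namespace Heap

variable {A B : Type}

theorem mem_dom {Γ : Heap A} {a : ℕ} : a ∈ Γ.dom ↔ Γ.look a ≠ none := by
  simp [dom]

theorem look_upd (Γ : Heap A) (a : ℕ) (x : A) :
    (Γ.upd a x).look = Function.update Γ.look a (some x) := by
  funext b
  simp [upd, Function.update_apply]

theorem look_erase (Γ : Heap A) (a : ℕ) :
    (Γ.erase a).look = Function.update Γ.look a none := by
  funext b
  simp [erase, Function.update_apply]

theorem look_map (Γ : Heap A) (f : A → B) : (Γ.map f).look = Option.map f ∘ Γ.look := rfl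

theorem look_map_of_look_eq_some {Γ : Heap A} {a : ℕ} {x : A} (f : A → B)
    (h : Γ.look a = some x) : (Γ.map f).look a = some (f x) := by
  simp [look_map, h]

theorem upd_eq_self {Γ : Heap A} {a : ℕ} {x : A} (h : Γ.look a = some x) : Γ.upd a x = Γ := by
  ext1
  rw [look_upd, ← h, Function.update_eq_self]

theorem erase_eq_self {Γ : Heap A} {a : ℕ} (h : Γ.look a = none) : Γ.erase a = Γ := by
  ext1
  rw [look_erase, ← h, Function.update_eq_self]

theorem erase_upd (Γ : Heap A) (a : ℕ) (x : A) : (Γ.upd a x).erase a = Γ.erase a := by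
  ext1
  rw [look_erase, look_upd, Function.update_idem, look_erase]

theorem map_upd (Γ : Heap A) (f : A → B) (a : ℕ) (x : A) :
    (Γ.upd a x).map f = (Γ.map f).upd a (f x) := by
  ext1
  rw [look_map, look_upd, look_upd, look_map, Function.comp_update, Option.map_some]

theorem map_erase (Γ : Heap A) (f : A → B) (a : ℕ) :
    (Γ.erase a).map f = (Γ.map f).erase a := by
  ext1
  rw [look_map, look_erase, look_erase, look_map, Function.comp_update, Option.map_none]

theorem dom_erase (Γ : Heap A) (a : ℕ) : (Γ.erase a).dom = Γ.dom.erase a := by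
  ext b
  simp [mem_dom, look_erase, Function.update_apply]

theorem total_erase (Γ : Heap A) (f : A → ℕ) (a : ℕ) :
    (Γ.erase a).total f = ∑ b ∈ Γ.dom.erase a, (Γ.look b).elim 0 f := by
  rw [total, dom_erase]
  refine Finset.sum_congr rfl fun b hb => ?_
  rw [look_erase, Function.update_of_ne (Finset.ne_of_mem_erase hb)]

theorem total_erase_le (Γ : Heap A) (f : A → ℕ) (a : ℕ) : (Γ.erase a).total f ≤ Γ.total f := by
  rw [total_erase]
  exact Finset.sum_le_sum_of_subset (Finset.erase_subset a Γ.dom)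

theorem total_erase_add {Γ : Heap A} {a : ℕ} {x : A} (f : A → ℕ) (h : Γ.look a = some x) :
    (Γ.erase a).total f + f x = Γ.total f := by
  have ha : a ∈ Γ.dom := mem_dom.mpr (by simp [h])
  rw [total_erase, total, ← Finset.sum_erase_add _ _ ha, h, Option.elim_some]

theorem total_upd (Γ : Heap A) (f : A → ℕ) (a : ℕ) (x : A) :
    (Γ.upd a x).total f = (Γ.erase a).total f + f x := by
  have hx : (Γ.upd a x).look a = some x := by simp [look_upd]
  rw [← total_erase_add f hx, erase_upd]

end Heap

namespace CIHV

/-- The credits stored in one heap cell; `ΦCI` sums them over the heap. -/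
def credits : CIHV → ℕ
  | .lazy n _ _ => n
  | _ => 0

/-- Erasure of the credit or heir annotation of one heap cell; `stripCI` applies it to every
cell. -/
def strip : CIHV → HeapVal
  | .fold v => .fold v
  | .memo _ v => .memo v
  | .lazy _ F v => .lazy F v

theorem credits_toCIHV (hv : HeapVal) : (toCIHV hv).credits = 0 := by
  cases hv <;> rfl

theorem strip_toCIHV (hv : HeapVal) : (toCIHV hv).strip = hv := by
  cases hv <;> rfl

end CIHV

section Annotations

variable {Γ : CIHeap} {a : ℕ} {c : CIHV}

theorem ΦCI_upd (Γ : CIHeap) (a : ℕ) (c : CIHV) :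
    ΦCI (Γ.upd a c) = ΦCI (Γ.erase a) + c.credits :=
  Γ.total_upd CIHV.credits a c

theorem ΦCI_erase_add (h : Γ.look a = some c) : ΦCI (Γ.erase a) + c.credits = ΦCI Γ :=
  Heap.total_erase_add CIHV.credits h

theorem ΦCI_erase_le (Γ : CIHeap) (a : ℕ) : ΦCI (Γ.erase a) ≤ ΦCI Γ :=
  Γ.total_erase_le CIHV.credits a

theorem stripCI_upd (Γ : CIHeap) (a : ℕ) (c : CIHV) :
    stripCI (Γ.upd a c) = (stripCI Γ).upd a c.strip :=
  Γ.map_upd CIHV.strip a c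

theorem stripCI_erase (Γ : CIHeap) (a : ℕ) : stripCI (Γ.erase a) = (stripCI Γ).erase a :=
  Γ.map_erase CIHV.strip a

theorem look_stripCI (h : Γ.look a = some c) : (stripCI Γ).look a = some c.strip :=
  Heap.look_map_of_look_eq_some CIHV.strip h

theorem look_stripCI_eq_none (h : Γ.look a = none) : (stripCI Γ).look a = none := by
  simp [stripCI, Heap.look_map, h]

end Annotations

namespace RBig

variable {𝓕 : FEnv} {Γ Δ : RHeap} {m k : ℕ} {u v : Val}

theorem save_of_save (h : RBig 𝓕 Γ (.save m u) k Δ v) (w : Val) :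
    RBig 𝓕 Γ (.save m w) k Δ w := by
  cases h
  exact .save ..

theorem pass_of_save (h : RBig 𝓕 Γ (.save m u) k Δ v) : RBig 𝓕 Γ (.pass u) k Δ v := by
  cases h
  exact .pass ..

end RBig

/-- Real evaluation `⌊Γ⌋ᶜᴵ : e ⇓ᴿ ⌊Δ⌋ᶜᴵ : v` whose amortised cost with respect to the potential
`ΦCI` is at most `n`.  The potential difference is taken in `ℤ`, since it may be negative. -/
def AmortizedRBig (𝓕 : FEnv) (Γ : CIHeap) (e : Expr) (n : ℕ) (Δ : CIHeap) (v : Val) : Prop :=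
  ∃ k : ℕ, RBig 𝓕 (stripCI Γ) e k (stripCI Δ) v ∧
    (k : ℤ) + (ΦCI Δ : ℤ) - (ΦCI Γ : ℤ) ≤ (n : ℤ)

namespace AmortizedRBig

variable {𝓕 : FEnv} {Γ Δ Θ : CIHeap} {e e₁ e₂ : Expr} {a k l m n : ℕ} {v w : Val}

theorem of_free (n : ℕ) (h : RBig 𝓕 (stripCI Γ) e 0 (stripCI Γ) v) :
    AmortizedRBig 𝓕 Γ e n Γ v :=
  ⟨0, h, by omega⟩

theorem map (c : ℕ) (h : AmortizedRBig 𝓕 Γ e₁ n Δ v)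
    (step : ∀ {k}, RBig 𝓕 (stripCI Γ) e₁ k (stripCI Δ) v →
      RBig 𝓕 (stripCI Γ) e₂ (k + c) (stripCI Δ) w) :
    AmortizedRBig 𝓕 Γ e₂ (n + c) Δ w := by
  obtain ⟨k, eval, cost⟩ := h
  exact ⟨k + c, step eval, by omega⟩

theorem alloc {hv : HeapVal} (ha : Γ.look a = none) :
    AmortizedRBig 𝓕 Γ (.alloc hv) 0 (Γ.upd a (toCIHV hv)) (.ptr a) := by
  refine ⟨0, ?_, ?_⟩
  · rw [stripCI_upd, CIHV.strip_toCIHV]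
    exact .alloc _ _ _ (look_stripCI_eq_none ha)
  · rw [ΦCI_upd, CIHV.credits_toCIHV, Heap.erase_eq_self ha]
    omega

theorem letE {x : String} (h₁ : AmortizedRBig 𝓕 Γ e₁ k Δ v)
    (h₂ : AmortizedRBig 𝓕 Δ (substE v x e₂) l Θ w) :
    AmortizedRBig 𝓕 Γ (.letE x e₁ e₂) (k + l) Θ w := by
  obtain ⟨k', eval₁, cost₁⟩ := h₁
  obtain ⟨l', eval₂, cost₂⟩ := h₂
  exact ⟨k' + l', .letE _ _ _ _ _ _ _ _ _ _ eval₁ eval₂, by omega⟩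

theorem save {F : String} (ha : Γ.look a = some (.lazy n F v)) :
    AmortizedRBig 𝓕 Γ (.save m (.ptr a)) m (Γ.upd a (.lazy (n + m) F v)) (.ptr a) := by
  refine ⟨0, ?_, ?_⟩
  · have strip_eq : stripCI (Γ.upd a (.lazy (n + m) F v)) = stripCI Γ := by
      rw [stripCI_upd]
      exact Heap.upd_eq_self (look_stripCI (c := .lazy n F v) ha)
    rw [strip_eq]
    exact .save ..
  · rw [ΦCI_upd, ← ΦCI_erase_add ha]
    simp only [CIHV.credits]
    omega

theorem force {F : String} {H : Heir} (ha : Γ.look a = some (.lazy n F v))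
    (h : AmortizedRBig 𝓕 (Γ.erase a) (.call F v) n Δ w) :
    AmortizedRBig 𝓕 Γ (.force (.ptr a)) 0 (Δ.upd a (.memo H w)) w := by
  obtain ⟨k, eval, cost⟩ := h
  refine ⟨k, ?_, ?_⟩
  · rw [stripCI_erase] at eval
    rw [stripCI_upd]
    exact .force _ _ _ _ _ _ _ (look_stripCI ha) eval
  · -- The body may have reallocated `a`, so installing the memo may discard credits of `Δ`.
    have after : ΦCI (Δ.upd a (.memo H w)) ≤ ΦCI Δ := by
      rw [ΦCI_upd]
      exact ΦCI_erase_le Δ a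
    have before : ΦCI (Γ.erase a) + n = ΦCI Γ := ΦCI_erase_add ha
    omega

end AmortizedRBig

theorem credit_inheritance_sound_general (𝓕 : FEnv) (Γ Δ : CIHeap) (e : Expr) (H : Heir)
    (n : ℕ) (v : Val) (h : CIBig 𝓕 Γ e H n Δ v) :
    ∃ k : ℕ, RBig 𝓕 (stripCI Γ) e k (stripCI Δ) v ∧
      (k : ℤ) + (ΦCI Δ : ℤ) - (ΦCI Γ : ℤ) ≤ (n : ℤ) := by
  change AmortizedRBig 𝓕 Γ e n Δ v
  induction h with
  | ret => exact .of_free _ (.ret ..)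
  | alloc _ _ _ ha => exact .alloc ha
  | letE _ _ _ _ _ _ _ _ _ _ _ _ _ _ _ ih₁ ih₂ => exact ih₁.letE ih₂
  | caseL _ _ _ _ _ _ _ _ _ _ _ ih => exact ih.map 0 (.caseL _ _ _ _ _ _ _ _ _)
  | caseR _ _ _ _ _ _ _ _ _ _ _ ih => exact ih.map 0 (.caseR _ _ _ _ _ _ _ _ _)
  | splitE _ _ _ _ _ _ _ _ _ _ _ ih => exact ih.map 0 (.splitE _ _ _ _ _ _ _ _ _)
  | app _ _ _ _ _ _ _ _ _ ih => exact ih.map 1 (.app _ _ _ _ _ _ _)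
  | unfoldE _ _ _ ha => exact .of_free _ (.unfoldE _ _ _ (look_stripCI ha))
  | call _ _ _ _ _ _ _ _ _ hF _ ih => exact ih.map 1 (.call _ _ _ _ _ _ _ _ hF)
  | save _ _ _ _ _ _ ha => exact .save ha
  | waste => exact .of_free _ (.save ..)
  | inherit _ _ _ _ _ _ _ _ _ ih => exact ih.map 0 (·.save_of_save _)
  | pass _ _ _ _ _ _ ih => exact ih.map 0 (·.pass_of_save)
  | force _ _ _ _ _ _ _ _ _ ha _ hk ih => exact .force ha (hk ▸ ih)
  | _ =>
    -- Only `CIBig.recall` is left; `recall` is a keyword and cannot name an alternative.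
    rename_i ha
    exact .of_free _ (RBig.recall _ _ _ (look_stripCI ha))

/-- **Soundness of the credit-inheritance cost model** (Lemma
`credit-inheritance-sound`): whenever `Γ : e ⇓ᶜᴵ_n Δ : v`, there exists `k`
with `⌊Γ⌋ᶜᴵ : e ⇓ᴿ_k ⌊Δ⌋ᶜᴵ : v` and `k + Φᶜᴵ(Δ) − Φᶜᴵ(Γ) ≤ n`. -/
theorem credit_inheritance_sound (𝓕 : FEnv) (Γ Δ : CIHeap) (e : Expr)
    (n : ℕ) (v : Val)
    (h : CIBig 𝓕 Γ e none n Δ v) :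
    ∃ k : ℕ, RBig 𝓕 (stripCI Γ) e k (stripCI Δ) v ∧
      (k : ℤ) + (ΦCI Δ : ℤ) - (ΦCI Γ : ℤ) ≤ (n : ℤ) :=
  credit_inheritance_sound_general 𝓕 Γ Δ e none n v h
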